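/- For any parameter γ ∈ (0, n/2 − 1) and any α-approximate predicted schedule x̂ (i.e., MS(p̂, x̂) ≤ α·OPT(p̂)), the mechanism ScaledGreedy is monotone (hence strategyproof), is (2+γ)α-consistent (if p̂ = p then its output x satisfies MS(p, x) ≤ (2+γ)·α·OPT(p)), and is (1 + 1/γ)n-robust (for every p and p̂ its output x satisfies MS(p, x) ≤ (1 + 1/γ)·n·OPT(p)). -/

import Mathlib

open scoped Classical
noncomputable section
variable {n m : ℕ}

/-- The makespan of allocation `a` under instance `p`. -/
def MS [NeZero n] (p : Fin n → Fin m → ℝ) (a : Fin m → Fin n) : ℝ :=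
  Finset.univ.sup' Finset.univ_nonempty fun i => ∑ j, if a j = i then p i j else 0

/-- The optimal makespan of instance `p`. -/
def OPT [NeZero n] (p : Fin n → Fin m → ℝ) : ℝ :=
  Finset.univ.inf' Finset.univ_nonempty fun a : Fin m → Fin n => MS p a

lemma exists_argmin [NeZero n] (v : Fin n → ℝ) :
    (Finset.univ.filter fun i => ∀ i', v i ≤ v i').Nonempty := by
  obtain ⟨i, -, hi⟩ := Finset.exists_min_image Finset.univ v Finset.univ_nonempty
  exact ⟨i, by
    simp only [Finset.mem_filter, Finset.mem_univ, true_and]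
    exact fun i' => hi i' (Finset.mem_univ i')⟩

/-- The state of the iterative loop of `ScaledGreedy`: the sets `J_i` and the scalars `r(i,j)`. -/
structure SGState (n m : ℕ) where
  J : Fin n → Finset (Fin m)
  r : Fin n → Fin m → ℝ

/-- The set `∪_i J_i` of jobs already put aside by the loop. -/
def sgAssigned (s : SGState n m) : Finset (Fin m) :=
  Finset.univ.filter fun j => ∃ i, j ∈ s.J i

/-- The set `I` of machines whose set `J_i` is not yet full. -/
def sgI [NeZero n] (phat : Fin n → Fin m → ℝ) (xhat : Fin m → Fin n) (γ : ℝ)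
    (s : SGState n m) : Finset (Fin n) :=
  Finset.univ.filter fun i => ∑ j ∈ s.J i, phat i j < γ * MS phat xhat

/-- The set `T` of candidate pairs `(i,j)`. -/
def sgT [NeZero n] (phat : Fin n → Fin m → ℝ) (xhat : Fin m → Fin n) (γ : ℝ)
    (s : SGState n m) : Finset (Fin n × Fin m) :=
  Finset.univ.filter fun q =>
    q.2 ∉ sgAssigned s ∧ q.1 ∈ sgI phat xhat γ s ∧
    phat q.1 q.2 < phat (xhat q.2) q.2 ∧
    ∀ i' ∈ sgI phat xhat γ s, phat i' q.2 < phat (xhat q.2) q.2 → phat q.1 q.2 ≤ phat i' q.2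

/-- The initial state of `ScaledGreedy`: `J_i = ∅` and `r(i,j) = max(p̂(î_j,j)/p̂(i,j), 1)`. -/
def sgInit (phat : Fin n → Fin m → ℝ) (xhat : Fin m → Fin n) : SGState n m :=
  ⟨fun _ => ∅, fun i j => max (phat (xhat j) j / phat i j) 1⟩

/-- One iteration of the while-loop of `ScaledGreedy`: a pair `(i*,j*) ∈ T` maximizing
`p̂(î_j,j)/p̂(i,j)` is selected, `j*` is added to `J_{i*}`, and `r(i,j*)` is set to `1` for
every machine `i` with `p̂(i*,j*) ≤ p̂(i,j*)`. -/
def SGStep [NeZero n] (phat : Fin n → Fin m → ℝ) (xhat : Fin m → Fin n) (γ : ℝ)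
    (s s' : SGState n m) : Prop :=
  ∃ q ∈ sgT phat xhat γ s,
    (∀ q' ∈ sgT phat xhat γ s,
      phat (xhat q'.2) q'.2 / phat q'.1 q'.2 ≤ phat (xhat q.2) q.2 / phat q.1 q.2) ∧
    s'.J = (fun i => if i = q.1 then insert q.2 (s.J i) else s.J i) ∧
    s'.r = fun i j => if j = q.2 ∧ phat q.1 q.2 ≤ phat i q.2 then 1 else s.r i j

/-- `s` is the state of `ScaledGreedy` at termination: it is reachable from the initial state
by iterations of the loop, and `T = ∅` so the loop has terminated. -/
def SGFinal [NeZero n] (phat : Fin n → Fin m → ℝ) (xhat : Fin m → Fin n) (γ : ℝ)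
    (s : SGState n m) : Prop :=
  Relation.ReflTransGen (SGStep phat xhat γ) (sgInit phat xhat) s ∧ sgT phat xhat γ s = ∅

/-- The allocation computed by `ScaledGreedy` from the terminal state `s`: each job `j` goes to
a machine minimizing `r(i,j)·p(i,j)`, with ties broken in favor of `î_j` first, then the machine
`i'` with `j ∈ J_{i'}` (if any), then the smallest-index machine. -/
def sgAssign [NeZero n] (s : SGState n m) (xhat : Fin m → Fin n)
    (p : Fin n → Fin m → ℝ) (j : Fin m) : Fin n :=
  let v : Fin n → ℝ := fun i => s.r i j * p i j
  if ∀ i, v (xhat j) ≤ v i then xhat j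
  else if h : ∃ i', j ∈ s.J i' ∧ ∀ i, v i' ≤ v i then Classical.choose h
  else (Finset.univ.filter fun i => ∀ i', v i ≤ v i').min' (exists_argmin v)

/-- `max_j r(i,j)`, the largest scalar of machine `i`. -/
def maxScalar [NeZero m] (r : Fin n → Fin m → ℝ) (i : Fin n) : ℝ :=
  Finset.univ.sup' Finset.univ_nonempty fun j => r i j
/-- An allocation rule is monotone if, for every machine `i` and every two instances agreeing
outside machine `i`, the inner product of the change in `i`'s allocation with the change in
`i`'s processing times is nonpositive. -/
def MonotoneAlloc {n m : ℕ} (A : (Fin n → Fin m → ℝ) → (Fin m → Fin n)) : Prop :=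
  ∀ (i : Fin n) (p p' : Fin n → Fin m → ℝ),
    (∀ i' j, 0 < p i' j) → (∀ i' j, 0 < p' i' j) →
    (∀ i' j, i' ≠ i → p i' j = p' i' j) →
    ∑ j, ((if A p j = i then (1 : ℝ) else 0) - (if A p' j = i then (1 : ℝ) else 0)) *
      (p i j - p' i j) ≤ 0

/-!
Monotonicity: every job goes to a machine minimizing the scaled time `r(i,j)·p(i,j)`, with scalars
that do not depend on `p`, so machine `i` can win a job it lost before only by lowering `p(i,j)`.

Consistency: on `p = p̂` every job `j` stays on `î_j` or goes to the machine that put it aside. A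
machine stops collecting jobs once they take time `γ·MS(p̂,x̂)`, so its set `J_i` takes time at most
`(γ+1)·MS(p̂,x̂)`, on top of its predicted load.

Robustness: comparing with an optimal schedule of `p`, the makespan is at most
`(∑ᵢ maxⱼ r(i,j))·OPT(p)`. If `r(i,j) > 1`, then machine `i` is full, and by the greedy choice every
`k ∈ J_i` has `p̂(î_k,k)/p̂(i,k) ≥ r(i,j)`. Hence
`r(i,j)·γ·MS(p̂,x̂) ≤ r(i,j)·∑_{k ∈ J_i} p̂(i,k) ≤ ∑_{k ∈ J_i} p̂(î_k,k)`. As the sets `J_i` are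
disjoint, the right-hand sides add up to at most `n·MS(p̂,x̂)`.
-/

section Load

/-- The load of machine `i` under allocation `a`; the makespan is the largest load. -/
def load (p : Fin n → Fin m → ℝ) (a : Fin m → Fin n) (i : Fin n) : ℝ :=
  ∑ j, if a j = i then p i j else 0

variable {p : Fin n → Fin m → ℝ}

lemma load_nonneg (hp : ∀ i j, 0 ≤ p i j) (a : Fin m → Fin n) (i : Fin n) : 0 ≤ load p a i :=
  Finset.sum_nonneg fun j _ => ite_nonneg (hp i j) le_rfl

lemma apply_le_load (hp : ∀ i j, 0 ≤ p i j) (a : Fin m → Fin n) (j : Fin m) :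
    p (a j) j ≤ load p a (a j) := by
  simpa [load] using Finset.single_le_sum (f := fun k => if a k = a j then p (a j) k else 0)
    (fun k _ => ite_nonneg (hp _ k) le_rfl) (Finset.mem_univ j)

lemma sum_load (p : Fin n → Fin m → ℝ) (a : Fin m → Fin n) :
    ∑ i, load p a i = ∑ j, p (a j) j := by
  simp only [load]
  rw [Finset.sum_comm]
  simp

lemma load_mul_left (c : Fin n → ℝ) (p : Fin n → Fin m → ℝ) (a : Fin m → Fin n) (i : Fin n) :
    load (fun i j => c i * p i j) a i = c i * load p a i := by
  simp only [load, Finset.mul_sum, mul_ite, mul_zero]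

lemma load_le_sum_add_load (hp : ∀ i j, 0 ≤ p i j) {a b : Fin m → Fin n}
    {J : Fin n → Finset (Fin m)} (hab : ∀ j, a j = b j ∨ j ∈ J (a j)) (i : Fin n) :
    load p a i ≤ ∑ j ∈ J i, p i j + load p b i := by
  have hJ : ∑ j ∈ J i, p i j = ∑ j, if j ∈ J i then p i j else 0 := by simp
  rw [hJ, load, load, ← Finset.sum_add_distrib]
  refine Finset.sum_le_sum fun j _ => ?_
  have hpij := hp i j
  have habj := hab j
  split_ifs <;> grind

variable [NeZero n]

lemma load_le_MS (p : Fin n → Fin m → ℝ) (a : Fin m → Fin n) (i : Fin n) : load p a i ≤ MS p a :=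
  Finset.le_sup' (load p a) (Finset.mem_univ i)

lemma MS_le {a : Fin m → Fin n} {C : ℝ} (h : ∀ i, load p a i ≤ C) : MS p a ≤ C :=
  Finset.sup'_le _ _ fun i _ => h i

lemma MS_nonneg (hp : ∀ i j, 0 ≤ p i j) (a : Fin m → Fin n) : 0 ≤ MS p a :=
  (load_nonneg hp a 0).trans (load_le_MS p a 0)

lemma apply_le_MS (hp : ∀ i j, 0 ≤ p i j) (a : Fin m → Fin n) (j : Fin m) : p (a j) j ≤ MS p a :=
  (apply_le_load hp a j).trans (load_le_MS p a (a j))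

lemma sum_mul_apply_le_sum_mul_MS {c : Fin n → ℝ} (hc : ∀ i, 0 ≤ c i) (p : Fin n → Fin m → ℝ)
    (a : Fin m → Fin n) : ∑ j, c (a j) * p (a j) j ≤ (∑ i, c i) * MS p a := by
  rw [← sum_load (fun i j => c i * p i j), Finset.sum_mul]
  refine Finset.sum_le_sum fun i _ => ?_
  rw [load_mul_left]
  exact mul_le_mul_of_nonneg_left (load_le_MS p a i) (hc i)

lemma sum_apply_le_card_mul_MS (p : Fin n → Fin m → ℝ) (a : Fin m → Fin n) :
    ∑ j, p (a j) j ≤ n * MS p a := by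
  simpa using sum_mul_apply_le_sum_mul_MS (c := fun _ => 1) (fun _ => zero_le_one) p a

lemma exists_MS_eq_OPT (p : Fin n → Fin m → ℝ) : ∃ a, MS p a = OPT p := by
  obtain ⟨a, -, ha⟩ := Finset.exists_mem_eq_inf' (Finset.univ_nonempty (α := Fin m → Fin n)) (MS p)
  exact ⟨a, ha.symm⟩

end Load

section ScaledArgmin

/-- The allocation `a` gives every job to a machine on which its processing time, scaled by `r`,
is smallest. This is all that monotonicity and robustness use of the final assignment. -/
def IsScaledArgmin (r p : Fin n → Fin m → ℝ) (a : Fin m → Fin n) : Prop :=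
  ∀ j i, r (a j) j * p (a j) j ≤ r i j * p i j

lemma IsScaledArgmin.apply_le_apply {r p p' : Fin n → Fin m → ℝ} {a a' : Fin m → Fin n}
    (ha : IsScaledArgmin r p a) (ha' : IsScaledArgmin r p' a') (hr : ∀ i j, 0 < r i j) {j : Fin m}
    (hpp' : ∀ i, i ≠ a j → p i j = p' i j) (hne : a' j ≠ a j) : p (a j) j ≤ p' (a j) j := by
  refine le_of_mul_le_mul_left ?_ (hr (a j) j)
  calc r (a j) j * p (a j) j ≤ r (a' j) j * p (a' j) j := ha j (a' j)
    _ = r (a' j) j * p' (a' j) j := by rw [hpp' _ hne]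
    _ ≤ r (a j) j * p' (a j) j := ha' j (a j)

lemma monotoneAlloc_of_isScaledArgmin {r : Fin n → Fin m → ℝ} (hr : ∀ i j, 0 < r i j)
    {A : (Fin n → Fin m → ℝ) → Fin m → Fin n} (hA : ∀ p, IsScaledArgmin r p (A p)) :
    MonotoneAlloc A := by
  intro i p p' _ _ hpp'
  refine Finset.sum_nonpos fun j _ => ?_
  by_cases hp : A p j = i <;> by_cases hp' : A p' j = i
  · simp [hp, hp']
  · subst hp
    have := (hA p).apply_le_apply (hA p') hr (fun k hk => hpp' k j hk) hp'
    simpa [hp'] using this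
  · subst hp'
    have := (hA p').apply_le_apply (hA p) hr (fun k hk => (hpp' k j hk).symm) hp
    simpa [hp] using this
  · simp [hp, hp']

lemma IsScaledArgmin.load_le_sum {r p : Fin n → Fin m → ℝ} {a : Fin m → Fin n}
    (ha : IsScaledArgmin r p a) (hr : ∀ i j, 1 ≤ r i j) (hp : ∀ i j, 0 ≤ p i j)
    (b : Fin m → Fin n) (i : Fin n) : load p a i ≤ ∑ j, r (b j) j * p (b j) j := by
  refine Finset.sum_le_sum fun j _ => ?_
  split_ifs with hj
  · subst hj
    exact (le_mul_of_one_le_left (hp _ j) (hr _ j)).trans (ha j (b j))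
  · exact mul_nonneg (zero_le_one.trans (hr _ j)) (hp _ j)

lemma IsScaledArgmin.MS_le_sum_mul_OPT [NeZero n] {r p : Fin n → Fin m → ℝ} {a : Fin m → Fin n}
    (ha : IsScaledArgmin r p a) (hr : ∀ i j, 1 ≤ r i j) (hp : ∀ i j, 0 ≤ p i j) {c : Fin n → ℝ}
    (hc : ∀ i, 0 ≤ c i) (hrc : ∀ i j, r i j ≤ c i) : MS p a ≤ (∑ i, c i) * OPT p := by
  obtain ⟨b, hb⟩ := exists_MS_eq_OPT p
  refine MS_le fun i => ?_
  calc load p a i ≤ ∑ j, r (b j) j * p (b j) j := ha.load_le_sum hr hp b i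
    _ ≤ ∑ j, c (b j) * p (b j) j :=
      Finset.sum_le_sum fun j _ => mul_le_mul_of_nonneg_right (hrc _ j) (hp _ j)
    _ ≤ (∑ i, c i) * MS p b := sum_mul_apply_le_sum_mul_MS hc p b
    _ = (∑ i, c i) * OPT p := by rw [hb]

end ScaledArgmin

section Assignment

variable [NeZero n]

lemma isScaledArgmin_sgAssign (s : SGState n m) (xhat : Fin m → Fin n) (p : Fin n → Fin m → ℝ) :
    IsScaledArgmin s.r p (sgAssign s xhat p) := by
  intro j i
  unfold sgAssign
  dsimp only
  split_ifs with hxhat hJ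
  · exact hxhat i
  · exact (Classical.choose_spec hJ).2 i
  · have hmin := Finset.min'_mem _ (exists_argmin fun i => s.r i j * p i j)
    exact (Finset.mem_filter.mp hmin).2 i

lemma sgAssign_eq_or_mem_J {s : SGState n m} {xhat : Fin m → Fin n} {p : Fin n → Fin m → ℝ}
    {j : Fin m} (h : (∀ i, s.r (xhat j) j * p (xhat j) j ≤ s.r i j * p i j) ∨
      ∃ i', j ∈ s.J i' ∧ ∀ i, s.r i' j * p i' j ≤ s.r i j * p i j) :
    sgAssign s xhat p j = xhat j ∨ j ∈ s.J (sgAssign s xhat p j) := by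
  unfold sgAssign
  dsimp only
  split_ifs with hxhat hJ
  · exact .inl rfl
  · exact .inr (Classical.choose_spec hJ).1
  · exact absurd h (not_or.mpr ⟨hxhat, hJ⟩)

end Assignment

/-- The scalar `r(i,j)` has not been reset to `1`: the loop has not put job `j` aside on a machine
predicted to be at least as fast as `i` on `j`. -/
def ScalarActive (phat : Fin n → Fin m → ℝ) (s : SGState n m) (i : Fin n) (j : Fin m) : Prop :=
  ∀ i₀, j ∈ s.J i₀ → phat i j < phat i₀ j

section Loop

variable [NeZero n] {phat : Fin n → Fin m → ℝ} {xhat : Fin m → Fin n} {γ : ℝ} {s s' : SGState n m}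

lemma exists_mem_sgT {i : Fin n} {j : Fin m} (hi : i ∈ sgI phat xhat γ s) (hj : ∀ k, j ∉ s.J k)
    (hlt : phat i j < phat (xhat j) j) :
    ∃ i', (i', j) ∈ sgT phat xhat γ s ∧ phat i' j ≤ phat i j := by
  obtain ⟨i', hi', hmin⟩ := Finset.exists_min_image
    ((sgI phat xhat γ s).filter fun i' => phat i' j < phat (xhat j) j) (fun i' => phat i' j)
    ⟨i, Finset.mem_filter.mpr ⟨hi, hlt⟩⟩
  simp only [Finset.mem_filter] at hi' hmin
  refine ⟨i', ?_, hmin i ⟨hi, hlt⟩⟩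
  simp only [sgT, sgAssigned, Finset.mem_filter, Finset.mem_univ, true_and, not_exists]
  exact ⟨hj, hi'.1, hi'.2, fun k hk hkj => hmin k ⟨hk, hkj⟩⟩

/-- The iteration leading from `s` to `s'` selects the pair `(a, b)`, that is, it puts job `b` aside
on machine `a`. The fields unfold `SGStep` for this pair. -/
structure SGSelects (phat : Fin n → Fin m → ℝ) (xhat : Fin m → Fin n) (γ : ℝ)
    (s s' : SGState n m) (a : Fin n) (b : Fin m) : Prop where
  notMem_J : ∀ i, b ∉ s.J i
  mem_sgI : a ∈ sgI phat xhat γ s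
  lt_predicted : phat a b < phat (xhat b) b
  le_of_lt_predicted : ∀ i ∈ sgI phat xhat γ s, phat i b < phat (xhat b) b → phat a b ≤ phat i b
  ratio_le_of_mem_sgT : ∀ q ∈ sgT phat xhat γ s,
    phat (xhat q.2) q.2 / phat q.1 q.2 ≤ phat (xhat b) b / phat a b
  J_eq : ∀ i, s'.J i = if i = a then insert b (s.J i) else s.J i
  r_eq : ∀ i j, s'.r i j = if j = b ∧ phat a b ≤ phat i b then 1 else s.r i j

lemma SGStep.exists_selects (h : SGStep phat xhat γ s s') :
    ∃ a b, SGSelects phat xhat γ s s' a b := by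
  obtain ⟨⟨a, b⟩, hT, hmax, hJ, hr⟩ := h
  have hT' := hT
  simp only [sgT, sgAssigned, Finset.mem_filter, Finset.mem_univ, true_and, not_exists] at hT'
  obtain ⟨hb, ha, hlt, hmin⟩ := hT'
  exact ⟨a, b, hb, ha, hlt, hmin, hmax, fun i => by rw [hJ], fun i j => by rw [hr]⟩

namespace SGSelects

variable {a : Fin n} {b : Fin m}

lemma mem_J_iff (h : SGSelects phat xhat γ s s' a b) {i : Fin n} {j : Fin m} :
    j ∈ s'.J i ↔ j ∈ s.J i ∨ i = a ∧ j = b := by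
  rw [h.J_eq]
  split_ifs with hi <;> simp [hi, or_comm]

lemma J_subset (h : SGSelects phat xhat γ s s' a b) (i : Fin n) : s.J i ⊆ s'.J i :=
  fun _ hj => h.mem_J_iff.mpr (.inl hj)

lemma sum_J_lt (h : SGSelects phat xhat γ s s' a b) :
    ∑ j ∈ s.J a, phat a j < γ * MS phat xhat :=
  (Finset.mem_filter.mp h.mem_sgI).2

lemma ratio_le (h : SGSelects phat xhat γ s s' a b) (hphat : ∀ i j, 0 < phat i j) {j : Fin m}
    (hj : ∀ k, j ∉ s.J k) (hlt : phat a j < phat (xhat j) j) :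
    phat (xhat j) j / phat a j ≤ phat (xhat b) b / phat a b := by
  obtain ⟨i', hT, hle⟩ := exists_mem_sgT h.mem_sgI hj hlt
  calc phat (xhat j) j / phat a j ≤ phat (xhat j) j / phat i' j :=
        div_le_div_of_nonneg_left (hphat _ _).le (hphat _ _) hle
    _ ≤ phat (xhat b) b / phat a b := h.ratio_le_of_mem_sgT _ hT

lemma scalarActive_mono (h : SGSelects phat xhat γ s s' a b) {i : Fin n} {j : Fin m}
    (hactive : ScalarActive phat s' i j) : ScalarActive phat s i j :=
  fun i₀ hj => hactive i₀ (h.J_subset i₀ hj)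

lemma scalarActive_iff_of_ne (h : SGSelects phat xhat γ s s' a b) {i : Fin n} {j : Fin m}
    (hj : j ≠ b) : ScalarActive phat s' i j ↔ ScalarActive phat s i j := by
  simp [ScalarActive, h.mem_J_iff, hj]

lemma scalarActive_selected_iff (h : SGSelects phat xhat γ s s' a b) {i : Fin n} :
    ScalarActive phat s' i b ↔ phat i b < phat a b := by
  simp [ScalarActive, h.mem_J_iff, h.notMem_J]

end SGSelects

/-- `s` occurs during some run of the loop of `ScaledGreedy`. -/
def SGReachable (phat : Fin n → Fin m → ℝ) (xhat : Fin m → Fin n) (γ : ℝ) (s : SGState n m) :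
    Prop :=
  Relation.ReflTransGen (SGStep phat xhat γ) (sgInit phat xhat) s

namespace SGReachable

variable {i i' : Fin n} {j k : Fin m}

lemma eq_of_mem_J (h : SGReachable phat xhat γ s) (hi : j ∈ s.J i) (hi' : j ∈ s.J i') :
    i = i' := by
  induction h with
  | refl => simp [sgInit] at hi
  | tail _ hstep ih =>
    obtain ⟨a, b, hsel⟩ := hstep.exists_selects
    have hb := hsel.notMem_J
    rw [hsel.mem_J_iff] at hi hi'
    grind

lemma lt_predicted_of_mem_J (h : SGReachable phat xhat γ s) (hj : j ∈ s.J i) :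
    phat i j < phat (xhat j) j := by
  induction h with
  | refl => simp [sgInit] at hj
  | tail _ hstep ih =>
    obtain ⟨a, b, hsel⟩ := hstep.exists_selects
    rcases hsel.mem_J_iff.mp hj with hj | ⟨rfl, rfl⟩
    · exact ih hj
    · exact hsel.lt_predicted

lemma r_eq (h : SGReachable phat xhat γ s) (i : Fin n) (j : Fin m) :
    s.r i j = if ScalarActive phat s i j then max (phat (xhat j) j / phat i j) 1 else 1 := by
  induction h with
  | refl => simp [sgInit, ScalarActive]
  | tail _ hstep ih =>
    obtain ⟨a, b, hsel⟩ := hstep.exists_selects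
    rw [hsel.r_eq, ih]
    by_cases hj : j = b
    · subst hj
      have hactive : ScalarActive phat _ i j := fun i₀ hi₀ => absurd hi₀ (hsel.notMem_J i₀)
      simp only [hsel.scalarActive_selected_iff, hactive, true_and, if_true, ← not_le, ite_not]
    · simp [hj, hsel.scalarActive_iff_of_ne hj]

lemma one_le_r (h : SGReachable phat xhat γ s) (i : Fin n) (j : Fin m) : 1 ≤ s.r i j := by
  rw [h.r_eq]
  split_ifs
  exacts [le_max_right _ _, le_rfl]

lemma sum_J_le (h : SGReachable phat xhat γ s) (hphat : ∀ i j, 0 ≤ phat i j) (hγ : 0 ≤ γ)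
    (i : Fin n) : ∑ j ∈ s.J i, phat i j ≤ (γ + 1) * MS phat xhat := by
  induction h with
  | refl => simpa [sgInit] using mul_nonneg (by linarith) (MS_nonneg hphat xhat)
  | tail _ hstep ih =>
    obtain ⟨a, b, hsel⟩ := hstep.exists_selects
    rw [hsel.J_eq]
    split_ifs with hi
    · subst hi
      rw [Finset.sum_insert (hsel.notMem_J _)]
      linarith [hsel.sum_J_lt, hsel.lt_predicted, apply_le_MS hphat xhat b]
    · exact ih

lemma le_sum_J_of_lt (h : SGReachable phat xhat γ s) (hphat : ∀ i j, 0 ≤ phat i j)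
    (hj : j ∈ s.J i') (hlt : phat i j < phat i' j) :
    γ * MS phat xhat ≤ ∑ k ∈ s.J i, phat i k := by
  induction h with
  | refl => simp [sgInit] at hj
  | tail _ hstep ih =>
    obtain ⟨a, b, hsel⟩ := hstep.exists_selects
    refine le_trans ?_ (Finset.sum_le_sum_of_subset_of_nonneg (hsel.J_subset i)
      fun k _ _ => hphat i k)
    rcases hsel.mem_J_iff.mp hj with hj | ⟨rfl, rfl⟩
    · exact ih hj
    · by_contra! hopen
      have hi : i ∈ sgI phat xhat γ _ := Finset.mem_filter.mpr ⟨Finset.mem_univ i, hopen⟩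
      exact hlt.not_ge (hsel.le_of_lt_predicted i hi (hlt.trans hsel.lt_predicted))

lemma ratio_le_ratio (h : SGReachable phat xhat γ s) (hphat : ∀ i j, 0 < phat i j)
    (hactive : ScalarActive phat s i j) (hlt : phat i j < phat (xhat j) j) (hk : k ∈ s.J i) :
    phat (xhat j) j / phat i j ≤ phat (xhat k) k / phat i k := by
  induction h with
  | refl => simp [sgInit] at hk
  | tail hreach hstep ih =>
    obtain ⟨a, b, hsel⟩ := hstep.exists_selects
    have hactive' := hsel.scalarActive_mono hactive
    rcases hsel.mem_J_iff.mp hk with hk | ⟨rfl, rfl⟩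
    · exact ih hactive' hk
    · -- Had `j` been put aside before `k`, on a slower machine than `i`, then `i` would be full.
      refine hsel.ratio_le hphat (fun i₀ hj => ?_) hlt
      exact hsel.sum_J_lt.not_ge
        (le_sum_J_of_lt hreach (fun i j => (hphat i j).le) hj (hactive' i₀ hj))

lemma ratio_mul_sum_J_le (h : SGReachable phat xhat γ s) (hphat : ∀ i j, 0 < phat i j)
    (hactive : ScalarActive phat s i j) (hlt : phat i j < phat (xhat j) j) :
    phat (xhat j) j / phat i j * ∑ k ∈ s.J i, phat i k ≤ ∑ k ∈ s.J i, phat (xhat k) k := by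
  rw [Finset.mul_sum]
  refine Finset.sum_le_sum fun k hk => ?_
  rw [← le_div_iff₀ (hphat i k)]
  exact h.ratio_le_ratio hphat hactive hlt hk

lemma sum_sum_J_le (h : SGReachable phat xhat γ s) (hphat : ∀ i j, 0 ≤ phat i j) :
    ∑ i, ∑ k ∈ s.J i, phat (xhat k) k ≤ n * MS phat xhat := by
  have hdisjoint : ((Finset.univ : Finset (Fin n)) : Set (Fin n)).PairwiseDisjoint s.J :=
    fun i _ i' _ hne => Finset.disjoint_left.mpr fun k hk hk' => hne (h.eq_of_mem_J hk hk')
  rw [← Finset.sum_biUnion hdisjoint]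
  refine le_trans ?_ (sum_apply_le_card_mul_MS phat xhat)
  exact Finset.sum_le_sum_of_subset_of_nonneg (Finset.subset_univ _) fun k _ _ => hphat _ k

lemma r_mul_phat (h : SGReachable phat xhat γ s) (hphat : ∀ i j, 0 < phat i j)
    (i : Fin n) (j : Fin m) : s.r i j * phat i j =
      if ScalarActive phat s i j then max (phat (xhat j) j) (phat i j) else phat i j := by
  rw [h.r_eq]
  split_ifs
  · rw [max_mul_of_nonneg _ _ (hphat i j).le, div_mul_cancel₀ _ (hphat i j).ne', one_mul]
  · exact one_mul _

lemma r_mul_phat_predicted_le (h : SGReachable phat xhat γ s) (hphat : ∀ i j, 0 < phat i j)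
    (hj : ∀ k, j ∉ s.J k) (i : Fin n) :
    s.r (xhat j) j * phat (xhat j) j ≤ s.r i j * phat i j := by
  have hactive (k : Fin n) : ScalarActive phat s k j := fun i₀ hi₀ => absurd hi₀ (hj i₀)
  simp [h.r_mul_phat hphat, hactive]

lemma r_mul_phat_le_of_mem_J (h : SGReachable phat xhat γ s) (hphat : ∀ i j, 0 < phat i j)
    (hj : j ∈ s.J i') (i : Fin n) : s.r i' j * phat i' j ≤ s.r i j * phat i j := by
  have hinactive : ¬ ScalarActive phat s i' j := fun hactive => lt_irrefl _ (hactive i' hj)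
  rw [h.r_mul_phat hphat, h.r_mul_phat hphat, if_neg hinactive]
  split_ifs with hactive
  · exact (h.lt_predicted_of_mem_J hj).le.trans (le_max_left _ _)
  · simp only [ScalarActive, not_forall, not_lt] at hactive
    obtain ⟨i₀, hi₀, hle⟩ := hactive
    rwa [h.eq_of_mem_J hj hi₀]

lemma sgAssign_phat_eq_or_mem_J (h : SGReachable phat xhat γ s) (hphat : ∀ i j, 0 < phat i j)
    (j : Fin m) : sgAssign s xhat phat j = xhat j ∨ j ∈ s.J (sgAssign s xhat phat j) := by
  apply sgAssign_eq_or_mem_J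
  by_cases hj : ∃ i', j ∈ s.J i'
  · obtain ⟨i', hi'⟩ := hj
    exact .inr ⟨i', hi', h.r_mul_phat_le_of_mem_J hphat hi'⟩
  · exact .inl (h.r_mul_phat_predicted_le hphat (not_exists.mp hj))

theorem MS_sgAssign_phat_le (h : SGReachable phat xhat γ s) (hphat : ∀ i j, 0 < phat i j)
    (hγ : 0 ≤ γ) : MS phat (sgAssign s xhat phat) ≤ (2 + γ) * MS phat xhat := by
  have hphat' : ∀ i j, 0 ≤ phat i j := fun i j => (hphat i j).le
  refine MS_le fun i => ?_
  calc load phat (sgAssign s xhat phat) i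
      ≤ ∑ j ∈ s.J i, phat i j + load phat xhat i :=
        load_le_sum_add_load hphat' (h.sgAssign_phat_eq_or_mem_J hphat) i
    _ ≤ (γ + 1) * MS phat xhat + MS phat xhat :=
        add_le_add (h.sum_J_le hphat' hγ i) (load_le_MS phat xhat i)
    _ = (2 + γ) * MS phat xhat := by ring

end SGReachable

namespace SGFinal

lemma reachable (h : SGFinal phat xhat γ s) : SGReachable phat xhat γ s := h.1

variable {i : Fin n} {j : Fin m}

lemma le_sum_J (h : SGFinal phat xhat γ s) (hphat : ∀ i j, 0 ≤ phat i j)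
    (hactive : ScalarActive phat s i j) (hlt : phat i j < phat (xhat j) j) :
    γ * MS phat xhat ≤ ∑ k ∈ s.J i, phat i k := by
  by_cases hj : ∃ i', j ∈ s.J i'
  · obtain ⟨i', hi'⟩ := hj
    exact h.reachable.le_sum_J_of_lt hphat hi' (hactive i' hi')
  · by_contra! hopen
    have hi : i ∈ sgI phat xhat γ s := Finset.mem_filter.mpr ⟨Finset.mem_univ i, hopen⟩
    obtain ⟨i', hT, -⟩ := exists_mem_sgT hi (not_exists.mp hj) hlt
    simp [h.2] at hT

lemma ratio_le (h : SGFinal phat xhat γ s) (hphat : ∀ i j, 0 < phat i j) (hγ : 0 < γ)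
    (hactive : ScalarActive phat s i j) (hlt : phat i j < phat (xhat j) j) :
    phat (xhat j) j / phat i j ≤ (∑ k ∈ s.J i, phat (xhat k) k) / (γ * MS phat xhat) := by
  have hphat' : ∀ i j, 0 ≤ phat i j := fun i j => (hphat i j).le
  have hMS : 0 < MS phat xhat := (hphat _ j).trans_le (apply_le_MS hphat' xhat j)
  rw [le_div_iff₀ (mul_pos hγ hMS)]
  calc phat (xhat j) j / phat i j * (γ * MS phat xhat)
      ≤ phat (xhat j) j / phat i j * ∑ k ∈ s.J i, phat i k :=
        mul_le_mul_of_nonneg_left (h.le_sum_J hphat' hactive hlt)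
          (div_nonneg (hphat' _ _) (hphat' _ _))
    _ ≤ ∑ k ∈ s.J i, phat (xhat k) k := h.reachable.ratio_mul_sum_J_le hphat hactive hlt

end SGFinal

/-- An upper bound for `max_j r(i,j)` in the final state. Without jobs the denominator is `0`,
and the value is `1`. -/
def scalarBound (phat : Fin n → Fin m → ℝ) (xhat : Fin m → Fin n) (γ : ℝ) (s : SGState n m)
    (i : Fin n) : ℝ :=
  1 + (∑ k ∈ s.J i, phat (xhat k) k) / (γ * MS phat xhat)

lemma one_le_scalarBound (hphat : ∀ i j, 0 ≤ phat i j) (hγ : 0 < γ) (s : SGState n m)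
    (i : Fin n) : 1 ≤ scalarBound phat xhat γ s i :=
  le_add_of_nonneg_right <| div_nonneg (Finset.sum_nonneg fun k _ => hphat _ k)
    (mul_nonneg hγ.le (MS_nonneg hphat xhat))

lemma SGFinal.r_le_scalarBound (h : SGFinal phat xhat γ s) (hphat : ∀ i j, 0 < phat i j)
    (hγ : 0 < γ) (i : Fin n) (j : Fin m) : s.r i j ≤ scalarBound phat xhat γ s i := by
  have hone := one_le_scalarBound (xhat := xhat) (fun i j => (hphat i j).le) hγ s i
  rw [h.reachable.r_eq]
  split_ifs with hactive
  · refine max_le ?_ hone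
    rcases lt_or_ge (phat i j) (phat (xhat j) j) with hlt | hge
    · exact (h.ratio_le hphat hγ hactive hlt).trans (le_add_of_nonneg_left zero_le_one)
    · exact ((div_le_one (hphat i j)).mpr hge).trans hone
  · exact hone

lemma SGReachable.sum_scalarBound_le (h : SGReachable phat xhat γ s)
    (hphat : ∀ i j, 0 ≤ phat i j) (hγ : 0 < γ) :
    ∑ i, scalarBound phat xhat γ s i ≤ (1 + 1 / γ) * n := by
  have hMS := MS_nonneg hphat xhat
  calc ∑ i, scalarBound phat xhat γ s i
      = n + (∑ i, ∑ k ∈ s.J i, phat (xhat k) k) / (γ * MS phat xhat) := by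
        simp [scalarBound, Finset.sum_add_distrib, Finset.sum_div]
    _ ≤ n + n * MS phat xhat / (γ * MS phat xhat) := by
        gcongr
        exact h.sum_sum_J_le hphat
    _ = n + n / γ * (MS phat xhat / MS phat xhat) := by rw [mul_div_mul_comm]
    _ ≤ n + n / γ * 1 := by
        gcongr
        exact div_self_le_one _
    _ = (1 + 1 / γ) * n := by ring

theorem SGFinal.MS_sgAssign_le (h : SGFinal phat xhat γ s) (hphat : ∀ i j, 0 < phat i j)
    (hγ : 0 < γ) {p : Fin n → Fin m → ℝ} (hp : ∀ i j, 0 ≤ p i j) :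
    MS p (sgAssign s xhat p) ≤ (1 + 1 / γ) * n * OPT p := by
  have hphat' : ∀ i j, 0 ≤ phat i j := fun i j => (hphat i j).le
  have hbound (i : Fin n) : 0 ≤ scalarBound phat xhat γ s i :=
    zero_le_one.trans (one_le_scalarBound hphat' hγ s i)
  have hOPT : 0 ≤ OPT p := by
    obtain ⟨b, hb⟩ := exists_MS_eq_OPT p
    exact hb ▸ MS_nonneg hp b
  calc MS p (sgAssign s xhat p) ≤ (∑ i, scalarBound phat xhat γ s i) * OPT p :=
        (isScaledArgmin_sgAssign s xhat p).MS_le_sum_mul_OPT h.reachable.one_le_r hp hbound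
          (h.r_le_scalarBound hphat hγ)
    _ ≤ (1 + 1 / γ) * n * OPT p :=
        mul_le_mul_of_nonneg_right (h.reachable.sum_scalarBound_le hphat' hγ) hOPT

end Loop

theorem sg_main_general [NeZero n]
    (phat : Fin n → Fin m → ℝ) (xhat : Fin m → Fin n) (γ α : ℝ) (s : SGState n m)
    (hphat : ∀ i j, 0 < phat i j) (hγ : 0 < γ)
    (hMS : MS phat xhat ≤ α * OPT phat) (hfinal : SGFinal phat xhat γ s) :
    MonotoneAlloc (sgAssign s xhat)
    ∧ MS phat (sgAssign s xhat phat) ≤ (2 + γ) * α * OPT phat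
    ∧ ∀ p : Fin n → Fin m → ℝ, (∀ i j, 0 ≤ p i j) →
      MS p (sgAssign s xhat p) ≤ (1 + 1 / γ) * n * OPT p := by
  have hreach := hfinal.reachable
  refine ⟨?_, ?_, fun p hp => hfinal.MS_sgAssign_le hphat hγ hp⟩
  · exact monotoneAlloc_of_isScaledArgmin (fun i j => zero_lt_one.trans_le (hreach.one_le_r i j))
      (isScaledArgmin_sgAssign s xhat)
  · calc MS phat (sgAssign s xhat phat) ≤ (2 + γ) * MS phat xhat :=
          hreach.MS_sgAssign_phat_le hphat hγ.le
      _ ≤ (2 + γ) * (α * OPT phat) := mul_le_mul_of_nonneg_left hMS (by linarith)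
      _ = (2 + γ) * α * OPT phat := by ring

/-- For any `γ ∈ (0, n/2 − 1)` and any `α`-approximate predicted schedule,
`ScaledGreedy` is monotone (hence strategyproof), `(2+γ)α`-consistent, and
`(1 + 1/γ)n`-robust. -/
theorem sg_main [NeZero n] [NeZero m]
    (phat : Fin n → Fin m → ℝ) (xhat : Fin m → Fin n) (γ α : ℝ) (s : SGState n m)
    (hphat : ∀ i j, 0 < phat i j)
    (hγ0 : 0 < γ) (hγ1 : γ < (n : ℝ) / 2 - 1) (hα : 1 ≤ α)
    (hMS : MS phat xhat ≤ α * OPT phat) (hfinal : SGFinal phat xhat γ s) :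
    MonotoneAlloc (sgAssign s xhat)
    ∧
    (∀ p : Fin n → Fin m → ℝ, (∀ i j, 0 < p i j) → phat = p →
      MS p (sgAssign s xhat p) ≤ (2 + γ) * α * OPT p)
    ∧
    (∀ p : Fin n → Fin m → ℝ, (∀ i j, 0 < p i j) →
      MS p (sgAssign s xhat p) ≤ (1 + 1 / γ) * n * OPT p) := by
  obtain ⟨hmono, hcons, hrob⟩ := sg_main_general phat xhat γ α s hphat hγ0 hMS hfinal
  exact ⟨hmono, fun p _ h => h ▸ hcons, fun p hp => hrob p fun i j => (hp i j).le⟩
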